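/- Let k ≥ 3 be an integer. There exists P such that for every prime p > P of the form p = 1 + k(k − 1)t with t odd, there exists a 2-(p,k,1)-design D (which then has exactly pt = p(p − 1)/(k(k − 1)) blocks) admitting a group of automorphisms of order pt that acts regularly on the set of blocks of D. -/

import Mathlib

/-!
The proof is Wilson's construction of a difference family, carried out in an arbitrary finite
field `F` of order `q = 1 + k(k-1)t` with `t` odd.

*From a base block to a design.* Put `e = k(k-1)/2`, so that `q - 1 = e·2t`. The classes of `Fˣ`
modulo the `2t`-th roots of unity are recognised by the value of `x ↦ x^(2t)`, and there are `e` of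
them. Suppose that `b 0, …, b (k-1)` are chosen so that the `e` differences `b i - b j`, `i < j`,
represent each class once. As `t` is odd, the `2t`-th roots of unity are `±h` with `h^t = 1`,
without repetition, so each nonzero `z` is uniquely `h (b i - b j)` with `h^t = 1` and `i ≠ j`
(`isBase_of_pow`). Hence two distinct points lie in exactly one set `h·b + a`, these sets are
indexed faithfully by `(h, a)`, and the group of maps `x ↦ h x + a` permutes them regularly.

*Existence of the base block.* Colour `x - y` by its class. For `Y ⊆ F` the second moment of the
number of incidences between the lines `x = y + c m` (indexed by `(x, c)`) and the points of `Y × K`,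
where `K` is the group of `2t`-th roots of unity, is computed exactly as for random sets
(`incidence_variance`). For `c` in a fixed class this number is the number of `y ∈ Y` with `x - y`
in that class, so, if `Y` has positive density, all but boundedly many `x` have at least
a fixed proportion of `Y` as neighbours in any given colour (`bad_count`). With that, one picks
`b 0, b 1, …` one at a time, shrinking the sets of candidates for the remaining points by a
constant factor at each step (`greedy`). This realises any prescribed colouring of the pairs once
`q` is large, in particular a rainbow one.
-/


/-- A `2`-`(v,k,1)` design on a point type `α` (with `v` the cardinality of `α`):
a collection of `k`-element subsets (blocks) such that any two distinct points
lie in exactly one block. -/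
structure Design (α : Type) [DecidableEq α] (k : ℕ) where
  blocks : Finset (Finset α)
  blockSize : ∀ B ∈ blocks, B.card = k
  pairCover : ∀ x y : α, x ≠ y → ∃! B, B ∈ blocks ∧ x ∈ B ∧ y ∈ B

/-- `g` is an automorphism of the design `D`: it permutes the point set and maps
the collection of blocks onto itself. -/
def IsAuto {α : Type} [DecidableEq α] {k : ℕ} (D : Design α k)
    (g : Equiv.Perm α) : Prop :=
  ∀ B : Finset α, B ∈ D.blocks ↔ B.image g ∈ D.blocks

section

open Finset

/-! ### Greedy embedding of a coloured complete graph -/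

/-- Suppose that for each colour `c` and each set `Y` of density at least `1 / M`, all but `A * M`
points `x` have at least `#Y / L` neighbours `y ∈ Y` with `R c x y`. Then, in a large vertex set,
every pattern of colours on the pairs `i < j` is realised with `x i ∈ Y i`, for any sets `Y i` of
density at least `1 / M`. The bound `N` depends on `n`, `M`, `L`, `A` only. -/
theorem greedy (L A n : ℕ) : ∀ M : ℕ, ∃ N : ℕ, ∀ (V C : Type) [Fintype V] [DecidableEq V]
    (R : C → V → V → Prop) [∀ c x y, Decidable (R c x y)],
    (∀ (c : C) (M : ℕ) (Y : Finset V), Fintype.card V ≤ M * #Y →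
      #{x : V | L * #{y ∈ Y | R c x y} < #Y} ≤ A * M) →
    N < Fintype.card V → ∀ (Y : Fin n → Finset V), (∀ i, Fintype.card V ≤ M * #(Y i)) →
    ∀ col : Fin n → Fin n → C,
    ∃ x : Fin n → V, (∀ i, x i ∈ Y i) ∧ ∀ i j, i < j → R (col i j) (x i) (x j) := by
  induction n with
  | zero => exact fun M => ⟨0, fun V C _ _ R _ _ _ Y _ col =>
      ⟨Fin.elim0, fun i => i.elim0, fun i => i.elim0⟩⟩
  | succ n ih =>
    intro M
    obtain ⟨N, hN⟩ := ih (M * L)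
    refine ⟨max N (M * (n * (A * M))), ?_⟩
    intro V C _ _ R _ hR hV Y hY col
    -- candidates for the first point leaving too few candidates for the `j`-th remaining point
    set bad : Fin n → Finset V := fun j =>
      {x : V | L * #{y ∈ Y j.succ | R (col 0 j.succ) x y} < #(Y j.succ)} with hbad
    have hb : #(univ.biUnion bad) ≤ n * (A * M) := by
      refine (card_biUnion_le_card_mul univ bad (A * M) fun j _ => hR _ _ _ (hY _)).trans ?_
      simp
    have h0 : #(univ.biUnion bad) < #(Y 0) := by
      refine hb.trans_lt (lt_of_not_ge fun h => ?_)
      have h1 := hY 0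
      have h2 := Nat.mul_le_mul_left M h
      have h3 := le_max_right N (M * (n * (A * M)))
      omega
    obtain ⟨x0, hx0, hx0'⟩ := exists_mem_notMem_of_card_lt_card h0
    have hgood : ∀ j : Fin n, #(Y j.succ) ≤ L * #{y ∈ Y j.succ | R (col 0 j.succ) x0 y} := by
      intro j
      by_contra h
      exact hx0' (mem_biUnion.2 ⟨j, mem_univ _, by simpa [hbad] using h⟩)
    obtain ⟨x, hx, hxc⟩ := hN V C R hR ((le_max_left _ _).trans_lt hV)
      (fun j => {y ∈ Y j.succ | R (col 0 j.succ) x0 y})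
      (fun j => (hY j.succ).trans (by
        rw [mul_assoc]; exact Nat.mul_le_mul_left _ (hgood j)))
      (fun i j => col i.succ j.succ)
    refine ⟨Fin.cons x0 x, ?_, ?_⟩
    · intro i
      refine Fin.cases ?_ (fun j => ?_) i
      · simpa using hx0
      · simpa using (mem_filter.1 (hx j)).1
    · intro i j
      refine Fin.cases ?_ (fun j => ?_) j
      · intro h; exact absurd h (Fin.not_lt_zero _)
      refine Fin.cases ?_ (fun i => ?_) i
      · intro _; simpa using (mem_filter.1 (hx j)).2
      · intro h; simpa using hxc i j (Fin.succ_lt_succ_iff.1 h)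

/-! ### Second moment of point-line incidences -/

variable {F : Type} [Field F] [Fintype F] [DecidableEq F]

/-- A pair `l = (x, c)` encodes the line `{(y, m) | x = y + c * m}`; each point lies on one line for
each value of `c`. -/
theorem incidence_first (P : Finset (F × F)) :
    ∑ l : F × F, #{p ∈ P | l.1 = p.1 + l.2 * p.2} = Fintype.card F * #P := by
  simp_rw [card_filter]
  rw [sum_comm]
  have : ∀ p ∈ P, ∑ l : F × F, (if l.1 = p.1 + l.2 * p.2 then 1 else 0) = Fintype.card F := by
    intro p _
    rw [Fintype.sum_prod_type_right]
    simp
  rw [sum_congr rfl this]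
  simp [mul_comm]

/-- Two distinct points lie on at most one of the lines `x = y + c * m`, and a point lies on
`Fintype.card F` of them. -/
theorem incidence_second (P : Finset (F × F)) :
    ∑ l : F × F, #{p ∈ P | l.1 = p.1 + l.2 * p.2} ^ 2 ≤ #P ^ 2 + Fintype.card F * #P := by
  have key : ∀ p p' : F × F, ∑ l : F × F, (if l.1 = p.1 + l.2 * p.2 then 1 else 0) *
      (if l.1 = p'.1 + l.2 * p'.2 then 1 else 0) ≤ 1 + if p = p' then Fintype.card F else 0 := by
    intro p p'
    rw [Fintype.sum_prod_type_right]
    simp only [ite_mul, one_mul, zero_mul, sum_ite_eq', mem_univ, if_true]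
    rw [← card_filter]
    split_ifs with h
    · exact (card_le_univ _).trans (by omega)
    · rw [add_zero, card_le_one]
      intro a ha b hb
      simp only [mem_filter, mem_univ, true_and] at ha hb
      have h1 : (a - b) * (p.2 - p'.2) = 0 := by linear_combination ha - hb
      rcases mul_eq_zero.1 h1 with h2 | h2
      · exact sub_eq_zero.1 h2
      · exfalso
        apply h
        have h3 := sub_eq_zero.1 h2
        rw [h3] at ha
        exact Prod.ext (add_right_cancel ha) h3
  simp_rw [card_filter, sq, sum_mul_sum]
  rw [sum_comm]
  calc _ = ∑ p ∈ P, ∑ p' ∈ P, ∑ l : F × F, (if l.1 = p.1 + l.2 * p.2 then 1 else 0) *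
        (if l.1 = p'.1 + l.2 * p'.2 then 1 else 0) := sum_congr rfl fun p _ => sum_comm
    _ ≤ ∑ p ∈ P, ∑ p' ∈ P, (1 + if p = p' then Fintype.card F else 0) :=
        sum_le_sum fun p _ => sum_le_sum fun p' _ => key p p'
    _ = _ := by
      simp only [sum_add_distrib, sum_const, smul_eq_mul, mul_one, sum_ite_eq]
      rw [sum_congr rfl (g := fun _ => Fintype.card F) (fun p hp => if_pos hp)]
      simp [mul_comm]

/-- The numbers of points of `P` on the lines `x = y + c * m` have average `#P / Fintype.card F`
and total squared deviation at most `Fintype.card F * #P`. -/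
theorem incidence_variance (P : Finset (F × F)) :
    ∑ l : F × F, ((#{p ∈ P | l.1 = p.1 + l.2 * p.2} : ℝ) - #P / Fintype.card F) ^ 2
      ≤ Fintype.card F * #P := by
  have h1 : ∑ l : F × F, (#{p ∈ P | l.1 = p.1 + l.2 * p.2} : ℝ) = Fintype.card F * #P := by
    exact_mod_cast incidence_first P
  have h2 : ∑ l : F × F, (#{p ∈ P | l.1 = p.1 + l.2 * p.2} : ℝ) ^ 2
      ≤ #P ^ 2 + Fintype.card F * #P := by exact_mod_cast incidence_second P
  have hq : (Fintype.card F : ℝ) ≠ 0 := by simp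
  simp_rw [sub_sq]
  rw [sum_add_distrib, sum_sub_distrib, ← sum_mul, ← mul_sum, h1]
  simp only [sum_const, card_univ, Fintype.card_prod, nsmul_eq_mul, Nat.cast_mul]
  have : 2 * (Fintype.card F * #P : ℝ) * (#P / Fintype.card F) = 2 * #P ^ 2 := by field_simp
  rw [this]
  have : (Fintype.card F * Fintype.card F : ℝ) * (#P / Fintype.card F) ^ 2 = #P ^ 2 := by field_simp
  rw [this]
  linarith

/-! ### Neighbourhoods in the power-residue colouring -/

/-- For `P = Y × {m | m ^ r = 1}` the number of incidences with the line `(x, c)` depends on `c`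
only through its class `c ^ r`. -/
theorem neighbour_count {r : ℕ} (Y : Finset F) {c : F} (hc : c ≠ 0) (x : F) :
    #{p ∈ Y ×ˢ ({m : F | m ^ r = 1} : Finset F) | x = p.1 + c * p.2} =
      #{y ∈ Y | (x - y) ^ r = c ^ r} := by
  refine card_bij' (fun p _ => p.1) (fun y _ => (y, (x - y) / c)) ?_ ?_ ?_ ?_
  · rintro ⟨y, m⟩ h
    simp only [mem_filter, mem_product, mem_univ, true_and] at h ⊢
    refine ⟨h.1.1, ?_⟩
    rw [h.2, add_sub_cancel_left, mul_pow, h.1.2, mul_one]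
  · intro y h
    simp only [mem_filter, mem_product, mem_univ, true_and] at h ⊢
    refine ⟨⟨h.1, ?_⟩, ?_⟩
    · rw [div_pow, h.2, div_self (pow_ne_zero _ hc)]
    · field_simp; ring
  · rintro ⟨y, m⟩ h
    simp only [mem_filter, mem_product, mem_univ, true_and] at h ⊢
    rw [h.2]; ext <;> simp [hc]
  · intro y h; rfl

/-- All but boundedly many `x` have at least `#Y / (2 s)` neighbours in `Y` of the colour of `u`,
provided `Y` has density at least `1 / M`. Each exceptional `x` contributes a large deviation to
`incidence_variance` for every `c` in the class of `u`. -/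
theorem bad_count {r s : ℕ} (hr : r ≠ 0) (hK : #({m : F | m ^ r = 1} : Finset F) = r)
    (hs : Fintype.card F ≤ s * r) (u : Fˣ) (M : ℕ) (Y : Finset F)
    (hY : Fintype.card F ≤ M * #Y) :
    #{x : F | 2 * s * #{y ∈ Y | (x - y) ^ r = (u : F) ^ r} < #Y} ≤ 4 * s ^ 2 * M := by
  set K : Finset F := {m : F | m ^ r = 1} with hKdef
  set X : Finset F := {x : F | 2 * s * #{y ∈ Y | (x - y) ^ r = (u : F) ^ r} < #Y} with hX
  set q := Fintype.card F with hq
  have hq0 : 0 < q := Fintype.card_pos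
  have hY0 : 0 < #Y := by
    rcases Nat.eq_zero_or_pos #Y with h | h
    · rw [h] at hY; omega
    · exact h
  have hs0 : 0 < s := by
    rcases Nat.eq_zero_or_pos s with h | h
    · rw [h] at hs; omega
    · exact h
  have hrp : 0 < r := Nat.pos_of_ne_zero hr
  have hC : #(K.image fun m => (u : F) * m) = r := by
    rw [card_image_of_injective _ (mul_right_injective₀ u.ne_zero), hK]
  have hvar := incidence_variance (Y ×ˢ K)
  rw [card_product, hK, ← hq] at hvar
  push_cast at hvar
  have hqR : (0 : ℝ) < q := by exact_mod_cast hq0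
  have hYR : (0 : ℝ) < #Y := by exact_mod_cast hY0
  have hsR : (0 : ℝ) < s := by exact_mod_cast hs0
  have hrR : (0 : ℝ) < r := by exact_mod_cast hrp
  have hsqr : (q : ℝ) ≤ s * r := by exact_mod_cast hs
  have hlow : (#X * r : ℝ) * (#Y * r / (2 * q)) ^ 2 ≤ q * (#Y * r) := by
    refine le_trans ?_ hvar
    refine le_trans ?_ (sum_le_sum_of_subset_of_nonneg
      (subset_univ (X ×ˢ (K.image fun m => (u : F) * m))) fun _ _ _ => sq_nonneg _)
    have : (#X * r : ℝ) = #(X ×ˢ (K.image fun m => (u : F) * m)) := by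
      rw [card_product, hC]; push_cast; rfl
    rw [this, ← nsmul_eq_mul]
    refine card_nsmul_le_sum _ _ _ ?_
    rintro ⟨x, c⟩ h
    rw [mem_product, mem_image] at h
    obtain ⟨hx, m, hm, hmc⟩ := h
    dsimp only at hx hmc ⊢
    have hm' : m ^ r = 1 := by simpa [hKdef] using hm
    have hcr : c ^ r = (u : F) ^ r := by rw [← hmc, mul_pow, hm', mul_one]
    have hc0 : c ≠ 0 := by
      rintro rfl
      rw [zero_pow hr] at hcr
      exact pow_ne_zero r u.ne_zero hcr.symm
    rw [neighbour_count Y hc0 x, hcr]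
    rw [hX, mem_filter] at hx
    have hx2 : (2 * s * #{y ∈ Y | (x - y) ^ r = (u : F) ^ r} : ℝ) < #Y := by
      exact_mod_cast hx.2
    set n : ℝ := (#{y ∈ Y | (x - y) ^ r = (u : F) ^ r} : ℝ) with hn
    have hn0 : 0 ≤ n := Nat.cast_nonneg _
    have h1 : n ≤ #Y * r / (2 * q) := by
      rw [le_div_iff₀ (by positivity)]
      nlinarith [mul_le_mul_of_nonneg_left hsqr hn0, mul_lt_mul_of_pos_right hx2 hrR]
    have h2 : (#Y * r / q : ℝ) = 2 * (#Y * r / (2 * q)) := by field_simp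
    rw [h2, sub_sq_comm]
    have h3 : (0 : ℝ) ≤ #Y * r / (2 * q) := by positivity
    exact pow_le_pow_left₀ h3 (by linarith) 2
  have h4 : (#X : ℝ) * (#Y * r ^ 2) ≤ 4 * q ^ 3 := by
    rw [div_pow, mul_div_assoc', div_le_iff₀ (by positivity)] at hlow
    have : (#X : ℝ) * (#Y * r ^ 2) * (#Y * r) ≤ 4 * q ^ 3 * (#Y * r) := by linarith
    exact le_of_mul_le_mul_right this (by positivity)
  have h5 : (q : ℝ) ^ 3 ≤ M * #Y * (s * r) ^ 2 := by
    rw [pow_succ']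
    have : (q : ℝ) ≤ M * #Y := by exact_mod_cast hY
    gcongr
  have h6 : (#X : ℝ) ≤ 4 * s ^ 2 * M := by
    have : (#X : ℝ) * (#Y * r ^ 2) ≤ 4 * s ^ 2 * M * (#Y * r ^ 2) := by nlinarith
    exact le_of_mul_le_mul_right this (by positivity)
  exact_mod_cast h6

theorem card_roots {r s : ℕ} (hq : Fintype.card F = 1 + s * r) :
    #({m : F | m ^ r = 1} : Finset F) = r := by
  have hcard : Nat.card Fˣ = s * r := by
    rw [Nat.card_eq_fintype_card, Fintype.card_units, hq]; omega
  have hsr : 0 < s * r := hcard ▸ Nat.card_pos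
  have hr : r ≠ 0 := by rintro rfl; simp at hsr
  have h1 := IsCyclic.card_powMonoidHom_ker (G := Fˣ) r
  rw [hcard, Nat.gcd_mul_left_left] at h1
  rw [Nat.card_eq_fintype_card] at h1
  rw [← Fintype.card_subtype]
  refine Eq.trans ?_ h1
  refine Fintype.card_congr ⟨fun m => ⟨Units.mk0 m.1 ?_, ?_⟩, fun u => ⟨(u.1 : F), ?_⟩, ?_, ?_⟩
  · intro h
    have := m.2
    rw [h, zero_pow hr] at this
    exact zero_ne_one this
  · rw [MonoidHom.mem_ker]; ext; simpa using m.2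
  · have := u.2
    rw [MonoidHom.mem_ker] at this
    simpa using congrArg Units.val this
  · intro m; rfl
  · intro u; ext; rfl

theorem card_pow_range {r s : ℕ} (hq : Fintype.card F = 1 + s * r) :
    Nat.card (powMonoidHom r : Fˣ →* Fˣ).range = s := by
  have hcard : Nat.card Fˣ = s * r := by
    rw [Nat.card_eq_fintype_card, Fintype.card_units, hq]; omega
  have hsr : 0 < s * r := hcard ▸ Nat.card_pos
  have hr : 0 < r := Nat.pos_of_ne_zero (by rintro rfl; simp at hsr)
  rw [IsCyclic.card_powMonoidHom_range, hcard, Nat.gcd_mul_left_left, Nat.mul_div_cancel _ hr]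

theorem card_pairs (k : ℕ) : 2 * Nat.card {p : Fin k × Fin k // p.1 < p.2} = k * (k - 1) := by
  have h : Nat.card {p : Fin k × Fin k // p.1 < p.2} = ∑ j : Fin k, (j : ℕ) := by
    rw [Nat.card_eq_fintype_card, Fintype.card_subtype, card_filter, Fintype.sum_prod_type_right]
    refine sum_congr rfl fun j _ => ?_
    rw [← card_filter, ← Fin.card_Iio j]
    congr 1
    ext i
    simp
  rw [h, Fin.sum_univ_eq_sum_range (fun i => i), mul_comm, sum_range_id_mul_two]

/-- In a large field, differences `b i - b j` with `i < j` can be made to represent every value of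
`u ↦ u ^ (2 * t)` on `Fˣ` exactly once. -/
theorem exists_base_block (k : ℕ) : ∃ N : ℕ, ∀ (F : Type) [Field F] [Fintype F] (t : ℕ),
    N < Fintype.card F → Fintype.card F = 1 + k * (k - 1) * t → Odd t →
    ∃ (b : Fin k → F) (f : {p : Fin k × Fin k // p.1 < p.2} ≃
      (powMonoidHom (2 * t) : Fˣ →* Fˣ).range), ∀ i j (h : i < j),
      (b i - b j) ^ (2 * t) = ((f ⟨(i, j), h⟩ : Fˣ) : F) := by
  set e := Nat.card {p : Fin k × Fin k // p.1 < p.2} with he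
  have hek : 2 * e = k * (k - 1) := card_pairs k
  -- `e + 1` is a convenient upper bound for `Fintype.card F / (2 * t)`
  obtain ⟨N, hN⟩ := greedy (2 * (e + 1)) (4 * (e + 1) ^ 2) k 1
  refine ⟨N, fun F _ _ t hNF hF ht => ?_⟩
  classical
  have ht0 : 2 * t ≠ 0 := by have := ht.pos; omega
  have hq : Fintype.card F = 1 + e * (2 * t) := by rw [hF, ← hek]; ring
  have hq' : Fintype.card F ≤ (e + 1) * (2 * t) := by
    rw [hq, add_mul, one_mul]; omega
  obtain ⟨f⟩ : Nonempty ({p : Fin k × Fin k // p.1 < p.2} ≃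
      (powMonoidHom (2 * t) : Fˣ →* Fˣ).range) := by
    rw [← Finite.card_eq, card_pow_range hq]
  have hsurj : ∀ p, ∃ u : Fˣ, u ^ (2 * t) = f p := fun p => (f p).2
  choose g hg using hsurj
  obtain ⟨b, -, hb⟩ := hN F Fˣ (fun u x y => (x - y) ^ (2 * t) = (u : F) ^ (2 * t))
    (fun u M Y hY => bad_count ht0 (card_roots hq) hq' u M Y hY) hNF
    (fun _ => univ) (fun _ => by simp)
    (fun i j => if h : i < j then g ⟨(i, j), h⟩ else 1)
  refine ⟨b, f, fun i j h => ?_⟩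
  rw [hb i j h, dif_pos h, ← hg, Units.val_pow_eq_pow_val]

/-! ### The design generated by a base block -/

/-- `b` is a base block for the group of `t`-th roots of unity `h`: every nonzero element is a
product `h * (b i - b j)`, with `h`, `i` and `j` unique. (A zero product arises only from `i = j`,
which `unique_rep` excludes for the first representation.) -/
structure IsBase {k : ℕ} (t : ℕ) (b : Fin k → F) : Prop where
  exists_rep : ∀ z : F, z ≠ 0 → ∃ i j h, h ^ t = 1 ∧ z = h * (b i - b j)
  unique_rep : ∀ i j i' j' h h', i ≠ j → h ^ t = 1 → h' ^ t = 1 →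
    h * (b i - b j) = h' * (b i' - b j') → i = i' ∧ j = j' ∧ h = h'

omit [Fintype F] [DecidableEq F] in
/-- Since `t` is odd and `-1 ≠ 1`, the `2t`-th roots of unity are the `t`-th roots of unity and their
negatives; the sign is absorbed by the order of the pair `(i, j)`. -/
theorem isBase_of_pow {k t : ℕ} (ht : Odd t) (h2 : (-1 : F) ≠ 1) (b : Fin k → F)
    (f : {p : Fin k × Fin k // p.1 < p.2} ≃ (powMonoidHom (2 * t) : Fˣ →* Fˣ).range)
    (hf : ∀ i j (h : i < j), (b i - b j) ^ (2 * t) = ((f ⟨(i, j), h⟩ : Fˣ) : F)) :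
    IsBase t b := by
  have ht0 : t ≠ 0 := ht.pos.ne'
  have hne : ∀ i j, i < j → b i - b j ≠ 0 := by
    intro i j h h0
    have := hf i j h
    rw [h0, zero_pow (by omega)] at this
    exact (f ⟨(i, j), h⟩ : Fˣ).ne_zero this.symm
  have hne' : ∀ i j, i ≠ j → b i - b j ≠ 0 := by
    intro i j h
    rcases lt_or_gt_of_ne h with h | h
    · exact hne i j h
    · rw [← neg_sub, neg_ne_zero]; exact hne j i h
  have hroot : ∀ w : F, w ^ (2 * t) = 1 → w ^ t = 1 ∨ (-w) ^ t = 1 := by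
    intro w hw
    rw [mul_comm, pow_mul, sq_eq_one_iff] at hw
    rcases hw with hw | hw
    · exact Or.inl hw
    · exact Or.inr (by rw [ht.neg_pow, hw, neg_neg])
  have hev : ∀ x y : F, (x - y) ^ (2 * t) = (y - x) ^ (2 * t) := by
    intro x y
    rw [← neg_sub, Even.neg_pow (even_two_mul t)]
  have hpow : ∀ h : F, h ^ t = 1 → h ^ (2 * t) = 1 := fun h hh => by
    rw [mul_comm, pow_mul, hh, one_pow]
  have hh0 : ∀ h : F, h ^ t = 1 → h ≠ 0 := by
    rintro h hh rfl
    rw [zero_pow ht0] at hh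
    exact zero_ne_one hh
  have huniq : ∀ i j i' j' h h', i < j → i' < j' → h ^ t = 1 → h' ^ t = 1 →
      (h * (b i - b j)) ^ (2 * t) = (h' * (b i' - b j')) ^ (2 * t) → i = i' ∧ j = j' := by
    intro i j i' j' h h' hij hij' hh hh' heq
    rw [mul_pow, mul_pow, hpow h hh, hpow h' hh', one_mul, one_mul, hf i j hij, hf i' j' hij'] at heq
    have := f.injective (Subtype.ext (Units.ext heq))
    simpa using this
  have hsign : ∀ h h' d : F, d ≠ 0 → h ^ t = 1 → h' ^ t = 1 → h * d = h' * -d → False := by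
    intro h h' d hd hh hh' heq
    have h3 : h = -h' := mul_right_cancel₀ hd (by rw [heq]; ring)
    rw [h3, ht.neg_pow, hh'] at hh
    exact h2 hh
  refine ⟨?_, ?_⟩
  · intro z hz
    obtain ⟨⟨⟨i, j⟩, hij⟩, hp⟩ := f.surjective ⟨Units.mk0 z hz ^ (2 * t), ⟨Units.mk0 z hz, rfl⟩⟩
    have h3 : (b i - b j) ^ (2 * t) = z ^ (2 * t) := by
      rw [hf i j hij, hp]; simp
    have hd := hne i j hij
    rcases hroot (z / (b i - b j)) (by rw [div_pow, h3, div_self (pow_ne_zero _ hz)]) with h4 | h4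
    · exact ⟨i, j, _, h4, by field_simp⟩
    · exact ⟨j, i, _, h4, by field_simp; ring⟩
  · intro i j i' j' h h' hij hh hh' heq
    have hij' : i' ≠ j' := by
      rintro rfl
      rw [sub_self, mul_zero] at heq
      exact mul_ne_zero (hh0 h hh) (hne' i j hij) heq
    have hp := congrArg (· ^ (2 * t)) heq
    have hfin : i = i' → j = j' → i = i' ∧ j = j' ∧ h = h' := by
      rintro rfl rfl
      exact ⟨rfl, rfl, mul_right_cancel₀ (hne' i j hij) heq⟩
    have hswap : i = j' → j = i' → i = i' ∧ j = j' ∧ h = h' := by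
      rintro rfl rfl
      exact (hsign h h' _ (hne' i j hij) hh hh' (by rw [heq]; ring)).elim
    rcases lt_or_gt_of_ne hij with l | l <;> rcases lt_or_gt_of_ne hij' with l' | l'
    · obtain ⟨h1, h2⟩ := huniq i j i' j' h h' l l' hh hh' hp
      exact hfin h1 h2
    · obtain ⟨h1, h2⟩ := huniq i j j' i' h h' l l' hh hh' (by
        rw [hp, mul_pow, mul_pow, hev])
      exact hswap h1 h2
    · obtain ⟨h1, h2⟩ := huniq j i i' j' h h' l l' hh hh' (by
        rw [← hp, mul_pow, mul_pow, hev])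
      exact hswap h2 h1
    · obtain ⟨h1, h2⟩ := huniq j i j' i' h h' l l' hh hh' (by
        rw [mul_pow, mul_pow, hev, ← mul_pow, hp, mul_pow, hev (b i')])
      exact hfin h2 h1

/-- The image of the base block `b` under the affine map `x ↦ h * x + a`. -/
def blk {k : ℕ} (b : Fin k → F) (h a : F) : Finset F := univ.image fun i => h * b i + a

omit [Fintype F] in
theorem mem_blk {k : ℕ} {b : Fin k → F} {h a x : F} : x ∈ blk b h a ↔ ∃ i, h * b i + a = x := by
  simp [blk]

namespace IsBase
variable {k t : ℕ} {b : Fin k → F}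

omit [Fintype F] in
theorem blk_unique (hb : IsBase t b) {h a h' a' x y : F} (hh : h ^ t = 1) (hh' : h' ^ t = 1)
    (hxy : x ≠ y) (hx : x ∈ blk b h a) (hy : y ∈ blk b h a) (hx' : x ∈ blk b h' a')
    (hy' : y ∈ blk b h' a') : h = h' ∧ a = a' := by
  obtain ⟨i, rfl⟩ := mem_blk.1 hx
  obtain ⟨j, rfl⟩ := mem_blk.1 hy
  obtain ⟨i', hi⟩ := mem_blk.1 hx'
  obtain ⟨j', hj⟩ := mem_blk.1 hy'
  have hij : i ≠ j := by rintro rfl; exact hxy rfl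
  obtain ⟨rfl, rfl, rfl⟩ := hb.unique_rep i j i' j' h h' hij hh hh' (by linear_combination hj - hi)
  exact ⟨rfl, (add_left_cancel hi).symm⟩

omit [Fintype F] [DecidableEq F] in
theorem injective (hb : IsBase t b) : Function.Injective b := by
  intro i j hij
  by_contra hne
  obtain ⟨h1, h2, -⟩ := hb.unique_rep i j j i 1 1 hne (one_pow _) (one_pow _) (by rw [hij])
  exact hne h1

omit [Fintype F] in
theorem card_blk (hb : IsBase t b) {h : F} (hh : h ≠ 0) (a : F) : #(blk b h a) = k := by
  rw [blk, card_image_of_injective, card_univ, Fintype.card_fin]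
  intro i j hij
  exact hb.injective (mul_left_cancel₀ hh (add_right_cancel hij))

omit [Fintype F] in
theorem blk_inj (hb : IsBase t b) (ht : t ≠ 0) (hk : 2 ≤ k) {h a h' a' : F} (hh : h ^ t = 1)
    (hh' : h' ^ t = 1) (heq : blk b h a = blk b h' a') : h = h' ∧ a = a' := by
  have h0 : h ≠ 0 := by rintro rfl; simp [ht] at hh
  obtain ⟨x, hx, y, hy, hxy⟩ := one_lt_card.1 (show 1 < #(blk b h a) by rw [hb.card_blk h0]; omega)
  exact hb.blk_unique hh hh' hxy hx hy (heq ▸ hx) (heq ▸ hy)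

/-- The design whose blocks are the images of `b` under the maps `x ↦ h * x + a` with
`h ^ t = 1`. -/
def design (hb : IsBase t b) (ht : t ≠ 0) : Design F k where
  blocks := (({h : F | h ^ t = 1} : Finset F) ×ˢ univ).image fun p => blk b p.1 p.2
  blockSize := by
    intro B hB
    obtain ⟨⟨h, a⟩, hp, rfl⟩ := mem_image.1 hB
    refine hb.card_blk ?_ a
    rintro rfl
    simp [ht] at hp
  pairCover := by
    intro x y hxy
    obtain ⟨i, j, h, hh, hz⟩ := hb.exists_rep (x - y) (sub_ne_zero.2 hxy)
    have hx : x ∈ blk b h (x - h * b i) := mem_blk.2 ⟨i, by ring⟩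
    have hy : y ∈ blk b h (x - h * b i) := mem_blk.2 ⟨j, by linear_combination hz⟩
    refine ⟨blk b h (x - h * b i), ⟨mem_image.2 ⟨(h, x - h * b i), by simp [hh], rfl⟩, hx, hy⟩, ?_⟩
    rintro B ⟨hB, hx', hy'⟩
    obtain ⟨⟨h', a'⟩, hp, rfl⟩ := mem_image.1 hB
    have hh' : h' ^ t = 1 := by simpa using hp
    obtain ⟨h1, h2⟩ := hb.blk_unique hh hh' hxy hx hy hx' hy'
    rw [h1, h2] at *

theorem mem_design (hb : IsBase t b) (ht : t ≠ 0) {B : Finset F} :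
    B ∈ (hb.design ht).blocks ↔ ∃ h a, h ^ t = 1 ∧ blk b h a = B := by
  simp [design]

theorem card_design (hb : IsBase t b) (ht : t ≠ 0) (hk : 2 ≤ k)
    (hc : #({h : F | h ^ t = 1} : Finset F) = t) :
    #(hb.design ht).blocks = Fintype.card F * t := by
  rw [design, card_image_of_injOn, card_product, hc, card_univ, mul_comm]
  rintro ⟨h, a⟩ hp ⟨h', a'⟩ hp' heq
  have hh : h ^ t = 1 := by simpa using hp
  have hh' : h' ^ t = 1 := by simpa using hp'
  obtain ⟨h1, h2⟩ := hb.blk_inj ht hk hh hh' heq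
  exact Prod.ext h1 h2

end IsBase

/-! ### The affine group and its action on the blocks -/

/-- The group of permutations `x ↦ h * x + a` with `h ^ t = 1`; the hypothesis `t ≠ 0` makes every
such `h` nonzero. -/
def affineGroup (F : Type) [Field F] (t : ℕ) (ht : t ≠ 0) : Subgroup (Equiv.Perm F) where
  carrier := {g | ∃ h a : F, h ^ t = 1 ∧ ∀ x, g x = h * x + a}
  one_mem' := ⟨1, 0, one_pow _, by simp⟩
  mul_mem' := by
    rintro g g' ⟨h, a, hh, hg⟩ ⟨h', a', hh', hg'⟩
    refine ⟨h * h', h * a' + a, by rw [mul_pow, hh, hh', one_mul], fun x => ?_⟩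
    rw [Equiv.Perm.mul_apply, hg', hg]; ring
  inv_mem' := by
    rintro g ⟨h, a, hh, hg⟩
    have h0 : h ≠ 0 := by rintro rfl; simp [ht] at hh
    refine ⟨h⁻¹, -(h⁻¹ * a), by rw [inv_pow, hh, inv_one], fun x => ?_⟩
    rw [Equiv.Perm.inv_eq_iff_eq, hg]
    field_simp; ring

omit [Fintype F] [DecidableEq F] in
theorem mem_affineGroup {t : ℕ} {ht : t ≠ 0} {g : Equiv.Perm F} :
    g ∈ affineGroup F t ht ↔ ∃ h a : F, h ^ t = 1 ∧ ∀ x, g x = h * x + a := Iff.rfl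

omit [Fintype F] [DecidableEq F] in
theorem exists_affine {t : ℕ} (ht : t ≠ 0) {h : F} (hh : h ^ t = 1) (a : F) :
    ∃ g ∈ affineGroup F t ht, ∀ x, g x = h * x + a := by
  have h0 : h ≠ 0 := by rintro rfl; simp [ht] at hh
  exact ⟨(Equiv.mulLeft₀ h h0).trans (Equiv.addRight a), ⟨h, a, hh, fun x => rfl⟩, fun x => rfl⟩

theorem card_affineGroup {t : ℕ} (ht : t ≠ 0) (hc : #({h : F | h ^ t = 1} : Finset F) = t) :
    Nat.card (affineGroup F t ht) = Fintype.card F * t := by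
  have h1 : Nat.card ({h : F // h ^ t = 1} × F) = Fintype.card F * t := by
    rw [Nat.card_prod, Nat.card_eq_fintype_card, Nat.card_eq_fintype_card, Fintype.card_subtype, hc,
      mul_comm]
  rw [← h1]
  choose φ hφ hφ' using fun p : {h : F // h ^ t = 1} × F => exists_affine ht p.1.2 p.2
  refine (Nat.card_eq_of_bijective (fun p => (⟨φ p, hφ p⟩ : affineGroup F t ht)) ⟨?_, ?_⟩).symm
  · rintro ⟨⟨h, hh⟩, a⟩ ⟨⟨h', hh'⟩, a'⟩ heq
    have hx : ∀ x, h * x + a = h' * x + a' := fun x => by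
      have h2 : φ (⟨h, hh⟩, a) = φ (⟨h', hh'⟩, a') := congrArg Subtype.val heq
      rw [← hφ' (⟨h, hh⟩, a), h2, hφ']
    have ha : a = a' := by simpa using hx 0
    subst ha
    have h3 : h = h' := by simpa using hx 1
    subst h3
    rfl
  · rintro ⟨g, h, a, hh, hg⟩
    refine ⟨(⟨h, hh⟩, a), Subtype.ext (Equiv.ext fun x => ?_)⟩
    rw [hg]; exact hφ' _ x

omit [Fintype F] in
theorem image_blk {k : ℕ} (b : Fin k → F) (h a : F) {g : Equiv.Perm F} {m c : F}
    (hg : ∀ x, g x = m * x + c) : (blk b h a).image g = blk b (m * h) (m * a + c) := by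
  rw [blk, image_image, blk]
  refine image_congr fun i _ => ?_
  simp only [Function.comp_apply, hg]; ring

theorem isAuto_of_mem {k t : ℕ} {b : Fin k → F} (hb : IsBase t b) (ht : t ≠ 0)
    {g : Equiv.Perm F} (hg : g ∈ affineGroup F t ht) : IsAuto (hb.design ht) g := by
  have key : ∀ g ∈ affineGroup F t ht, ∀ B ∈ (hb.design ht).blocks,
      B.image g ∈ (hb.design ht).blocks := by
    rintro g ⟨m, c, hm, hg⟩ B hB
    obtain ⟨h, a, hh, rfl⟩ := (hb.mem_design ht).1 hB
    exact (hb.mem_design ht).2 ⟨_, _, by rw [mul_pow, hm, hh, one_mul], (image_blk b h a hg).symm⟩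
  refine fun B => ⟨key g hg B, fun h => ?_⟩
  have := key g⁻¹ (inv_mem hg) _ h
  rwa [image_image, show (⇑g⁻¹ ∘ ⇑g) = id by ext; simp, image_id] at this

/-- The result over an arbitrary finite field, of prime order or not. -/
theorem regular_design (k : ℕ) (hk : 3 ≤ k) :
    ∃ P : ℕ, ∀ (F : Type) [Field F] [Fintype F] [DecidableEq F] (t : ℕ), P < Fintype.card F →
      Fintype.card F = 1 + k * (k - 1) * t → Odd t →
      ∃ D : Design F k, D.blocks.card = Fintype.card F * t ∧
        ∃ H : Subgroup (Equiv.Perm F),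
          (∀ g ∈ H, IsAuto D g) ∧ Nat.card H = Fintype.card F * t ∧
          (∀ B ∈ D.blocks, ∀ B' ∈ D.blocks, ∃ g ∈ H, B.image g = B') ∧
          (∀ g ∈ H, g ≠ 1 → ∀ B ∈ D.blocks, B.image g ≠ B) := by
  obtain ⟨P, hP⟩ := exists_base_block k
  refine ⟨P, fun F _ _ _ t hPF hF ht => ?_⟩
  obtain ⟨b, f, hf⟩ := hP F t hPF hF ht
  have ht0 : t ≠ 0 := ht.pos.ne'
  have h2 : (-1 : F) ≠ 1 := by
    refine Ring.neg_one_ne_one_of_char_ne_two fun hchar => ?_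
    have h3 := FiniteField.even_card_of_char_two hchar
    have h4 : Even (k * (k - 1)) := Nat.even_mul_pred_self k
    obtain ⟨c, hc⟩ := h4.mul_right t
    omega
  have hb := isBase_of_pow ht h2 b f hf
  have hc : #({h : F | h ^ t = 1} : Finset F) = t := card_roots hF
  refine ⟨hb.design ht0, hb.card_design ht0 (by omega) hc, affineGroup F t ht0,
    fun g hg => isAuto_of_mem hb ht0 hg, card_affineGroup ht0 hc, ?_, ?_⟩
  · intro B hB B' hB'
    obtain ⟨h, a, hh, rfl⟩ := (hb.mem_design ht0).1 hB
    obtain ⟨h', a', hh', rfl⟩ := (hb.mem_design ht0).1 hB'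
    have h0 : h ≠ 0 := by rintro rfl; simp [ht0] at hh
    obtain ⟨g, hg, hg'⟩ := exists_affine ht0 (h := h' / h) (by rw [div_pow, hh, hh', div_one])
      (a' - h' / h * a)
    refine ⟨g, hg, ?_⟩
    rw [image_blk b h a hg', div_mul_cancel₀ _ h0, add_sub_cancel]
  · rintro g ⟨m, c, hm, hg⟩ hg1 B hB heq
    obtain ⟨h, a, hh, rfl⟩ := (hb.mem_design ht0).1 hB
    have h0 : h ≠ 0 := by rintro rfl; simp [ht0] at hh
    rw [image_blk b h a hg] at heq
    obtain ⟨h3, h4⟩ := hb.blk_inj ht0 (by omega) (by rw [mul_pow, hm, hh, one_mul]) hh heq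
    have hm1 : m = 1 := mul_right_cancel₀ h0 (by rw [h3, one_mul])
    subst hm1
    have hc0 : c = 0 := by simpa using h4
    exact hg1 (Equiv.ext fun x => by rw [hg, hc0]; simp)

end

/-- Let `k ≥ 3`. There exists `P` such that for every prime `p > P` of the form
`p = 1 + k(k-1)t` with `t` odd, there is a `2`-`(p,k,1)` design `D` with exactly
`p·t` blocks admitting a group of automorphisms of order `p·t` acting regularly
on the set of blocks of `D`. -/
theorem statement19 (k : ℕ) (hk : 3 ≤ k) :
    ∃ P : ℕ, ∀ p t : ℕ, p.Prime → P < p → p = 1 + k * (k - 1) * t → Odd t →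
      ∃ D : Design (Fin p) k, D.blocks.card = p * t ∧
        ∃ H : Subgroup (Equiv.Perm (Fin p)),
          (∀ g ∈ H, IsAuto D g) ∧ Nat.card H = p * t ∧
          (∀ B ∈ D.blocks, ∀ B' ∈ D.blocks, ∃ g ∈ H, B.image g = B') ∧
          (∀ g ∈ H, g ≠ 1 → ∀ B ∈ D.blocks, B.image g ≠ B) := by
  obtain ⟨P, hP⟩ := regular_design k hk
  refine ⟨P, fun p t hp hPp hpt ht => ?_⟩
  have : Fact p.Prime := ⟨hp⟩
  have : NeZero p := ⟨hp.ne_zero⟩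
  -- the ring operations of `Fin p` itself are irrelevant, only a field structure on it is needed
  let : Field (Fin p) := (ZMod.finEquiv p).toEquiv.field
  simpa using hP (Fin p) t (by simpa using hPp) (by simpa using hpt) ht
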